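/- arXiv:2007.09895 — 10 statements merged into one kernel-verified Lean document; each statement's English description precedes it below -/
import Mathlib

section
/- Let 0 < ε ≤ 1/2 and let D be a distribution over [N] with d_TV(D, U) ≤ 1 − 3ε. Then there exists an integer t with 1.01^{t+1} ≥ ε and 1.01^t ≤ 1/ε such that both Σ_{x ∈ [N] : 1.01^t/N ≤ D(x) ≤ 1.01^{t+1}/N} D(x) ≥ ε/(210·ln(1/ε)) and (1/N)·|{x ∈ [N] : 1.01^t/N ≤ D(x) ≤ 1.01^{t+1}/N}| ≥ ε/(210·ln(1/ε)). -/
open Finset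

/-- If `d_TV(D, U) ≤ 1 − 3ε` then there is an integer `t` with `1.01^(t+1) ≥ ε` and
`1.01^t ≤ 1/ε` such that both the `D`-mass and the uniform mass of
`{x : 1.01^t/N ≤ D(x) ≤ 1.01^(t+1)/N}` are at least `ε/(210·ln(1/ε))`. -/
theorem exists_good_scale_of_tv_le
    (N : ℕ) (D : ℕ → ℝ) (ε : ℝ) (hε0 : 0 < ε) (hε1 : ε ≤ 1 / 2)
    (hD0 : ∀ i ∈ Icc 1 N, 0 ≤ D i) (hD1 : ∑ i ∈ Icc 1 N, D i = 1)
    (htv : (1 / 2) * ∑ i ∈ Icc 1 N, |D i - 1 / N| ≤ 1 - 3 * ε) :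
    ∃ t : ℤ, ε ≤ (1.01 : ℝ) ^ (t + 1) ∧ (1.01 : ℝ) ^ t ≤ 1 / ε ∧
      ε / (210 * Real.log (1 / ε)) ≤
        ∑ x ∈ (Icc 1 N).filter
          (fun x => (1.01 : ℝ) ^ t / N ≤ D x ∧ D x ≤ (1.01 : ℝ) ^ (t + 1) / N), D x ∧
      ε / (210 * Real.log (1 / ε)) ≤
        (1 / (N : ℝ)) * (((Icc 1 N).filter
          (fun x => (1.01 : ℝ) ^ t / N ≤ D x ∧ D x ≤ (1.01 : ℝ) ^ (t + 1) / N)).card : ℝ) := by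
  have hN : 0 < N := by
    rcases Nat.eq_zero_or_pos N with h | h
    · subst h; simp at hD1
    · exact h
  have hNR : (0 : ℝ) < N := by exact_mod_cast hN
  set L := Real.log (1 / ε) with hL
  have hLε : Real.log ε = -L := by rw [hL, one_div, Real.log_inv]; ring
  have hL2 : 1 / 2 ≤ L := by
    have h1 : Real.log 2 ≤ L := by
      apply Real.log_le_log (by norm_num)
      rw [le_div_iff₀ hε0]; linarith
    have := Real.log_two_gt_d9
    linarith
  set l := Real.log (1.01 : ℝ) with hl
  have hl1 : 1 / 101 ≤ l := by
    have := Real.one_sub_inv_le_log_of_pos (x := (1.01 : ℝ)) (by norm_num)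
    norm_num at this ⊢
    convert this using 1
    rw [hl]; norm_num
  have hl0 : 0 < l := by linarith
  have hLl : L / l ≤ 101 * L := by
    rw [div_le_iff₀ hl0]; nlinarith
  let f : ℕ → ℤ := fun x => ⌊Real.log (N * D x) / l⌋
  let S := (Icc 1 N).filter (fun x => ε ≤ N * D x ∧ N * D x ≤ 1 / ε)
  let m : ℕ → ℝ := fun x => min (D x) (1 / N)
  have hsum : ε ≤ ∑ x ∈ S, m x := by
    have hmin : ∀ x, m x = (D x + 1 / N - |D x - 1 / N|) / 2 := by
      intro x
      simp only [m]
      rcases le_total (D x) (1 / N) with h | h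
      · rw [min_eq_left h, abs_of_nonpos (by linarith)]; ring
      · rw [min_eq_right h, abs_of_nonneg (by linarith)]; ring
    have hc : ∑ x ∈ Icc 1 N, (1 / N : ℝ) = 1 := by
      rw [sum_const, Nat.card_Icc, nsmul_eq_mul]; simp; field_simp
    have h1 : 3 * ε ≤ ∑ x ∈ Icc 1 N, m x := by
      simp only [hmin]
      rw [← Finset.sum_div, sum_sub_distrib, sum_add_distrib, hc, hD1]
      linarith
    have h2 : ∑ x ∈ Icc 1 N, m x ≤ ∑ x ∈ Icc 1 N, (ε * (1 / N) + ε * D x +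
        if ε ≤ N * D x ∧ N * D x ≤ 1 / ε then m x else 0) := by
      apply sum_le_sum
      intro x hx
      have hd := hD0 x hx
      have a1 : 0 ≤ ε * (1 / N : ℝ) := by positivity
      have a2 : 0 ≤ ε * D x := by positivity
      split_ifs with h
      · linarith
      · by_cases h' : ε ≤ N * D x
        · have h3 : 1 / ε < N * D x := by
            by_contra hh; exact h ⟨h', not_lt.mp hh⟩
          have : (1 / N : ℝ) ≤ ε * D x := by
            rw [div_lt_iff₀ hε0] at h3
            rw [div_le_iff₀ hNR]; nlinarith
          have := min_le_right (D x) (1 / N : ℝ)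
          simp only [m]; linarith
        · have : D x ≤ ε * (1 / N) := by
            rw [mul_one_div, le_div_iff₀ hNR]; linarith
          have := min_le_left (D x) (1 / N : ℝ)
          simp only [m]; linarith
    rw [sum_add_distrib, sum_add_distrib, ← mul_sum, ← mul_sum, hc, hD1, ← sum_filter] at h2
    simp only [S]; linarith
  let T := Icc ⌊-L / l⌋ ⌊L / l⌋
  have hmap : ∀ x ∈ S, f x ∈ T := by
    intro x hx
    obtain ⟨_, h1, h2⟩ := mem_filter.mp hx
    have h0 : 0 < N * D x := lt_of_lt_of_le hε0 h1
    refine mem_Icc.mpr ⟨Int.floor_le_floor ?_, Int.floor_le_floor ?_⟩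
    · rw [← hLε]
      exact div_le_div_of_nonneg_right (Real.log_le_log hε0 h1) hl0.le
    · exact div_le_div_of_nonneg_right (Real.log_le_log h0 h2) hl0.le
  have hLl0 : 0 < L / l := by apply div_pos _ hl0; linarith
  have hneg : -L / l = -(L / l) := by ring
  have hle : ⌊-L / l⌋ ≤ ⌊L / l⌋ := Int.floor_le_floor (by linarith)
  have hT : (T.card : ℝ) ≤ 210 * L := by
    have e : ((T.card : ℤ) : ℝ) = ⌊L / l⌋ + 1 - ⌊-L / l⌋ := by
      simp only [T]
      rw [Int.card_Icc, Int.toNat_of_nonneg (by omega)]; push_cast; ring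
    have h1 := Int.floor_le (L / l)
    have h2 := Int.lt_floor_add_one (-L / l)
    rw [Int.cast_natCast] at e
    linarith
  have hB : 0 < ε / (210 * L) := by apply div_pos hε0; linarith
  obtain ⟨t, -, ht⟩ := exists_le_sum_fiber_of_maps_to_of_nsmul_le_sum (f := f) (w := m) hmap
    ⟨_, left_mem_Icc.mpr hle⟩ (b := ε / (210 * L)) (by
      rw [nsmul_eq_mul]
      refine le_trans ?_ hsum
      rw [mul_div_assoc', div_le_iff₀ (by linarith)]
      nlinarith)
  have key : ∀ x ∈ S, f x = t → (1.01 : ℝ) ^ t ≤ N * D x ∧ N * D x ≤ (1.01 : ℝ) ^ (t + 1) := by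
    intro x hx hft
    obtain ⟨_, h1, h2⟩ := mem_filter.mp hx
    have h0 : 0 < N * D x := lt_of_lt_of_le hε0 h1
    have a := Int.floor_le (Real.log (N * D x) / l)
    have b := Int.lt_floor_add_one (Real.log (N * D x) / l)
    change ⌊Real.log (N * D x) / l⌋ = t at hft
    rw [hft] at a b
    rw [le_div_iff₀ hl0] at a
    rw [div_lt_iff₀ hl0] at b
    constructor
    · rw [← Real.log_le_log_iff (by positivity) h0, Real.log_zpow]; exact a
    · rw [← Real.log_le_log_iff h0 (by positivity), Real.log_zpow]; push_cast; exact b.le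
  have hsub : S.filter (fun x => f x = t) ⊆ (Icc 1 N).filter
      (fun x => (1.01 : ℝ) ^ t / N ≤ D x ∧ D x ≤ (1.01 : ℝ) ^ (t + 1) / N) := by
    intro x hx
    obtain ⟨hxS, hft⟩ := mem_filter.mp hx
    obtain ⟨a, b⟩ := key x hxS hft
    refine mem_filter.mpr ⟨(mem_filter.mp hxS).1, ?_, ?_⟩
    · rw [div_le_iff₀ hNR]; linarith
    · rw [le_div_iff₀ hNR]; linarith
  have hmem : ∃ x, x ∈ S.filter (fun x => f x = t) := by
    by_contra hne
    push Not at hne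
    rw [eq_empty_of_forall_notMem hne, sum_empty] at ht
    linarith
  obtain ⟨x, hx⟩ := hmem
  obtain ⟨hxS, hft⟩ := mem_filter.mp hx
  obtain ⟨a, b⟩ := key x hxS hft
  obtain ⟨_, h1, h2⟩ := mem_filter.mp hxS
  refine ⟨t, h1.trans b, a.trans h2, ?_, ?_⟩
  · refine ht.trans ((sum_le_sum fun x _ => min_le_left _ _).trans ?_)
    exact sum_le_sum_of_subset_of_nonneg hsub fun i hi _ => hD0 i (mem_filter.mp hi).1
  · refine ht.trans ((sum_le_sum fun x _ => min_le_right _ _).trans ?_)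
    rw [sum_const, nsmul_eq_mul, mul_comm]
    have := card_le_card hsub
    gcongr
end

section
/- Fix 0 < ε ≤ 1/2 and 0 < α ≤ 1/2, let ℓ ≥ 2, and let Q be a distribution over [ℓ] with q_i = Q(i). Suppose that d_TV(Q, Q') ≥ ε for every distribution Q' over [ℓ] satisfying the exponential property with parameter α. Then Σ_{i=2}^ℓ max(0, q_i − (1+α)·q_{i−1}) ≥ α·ε/2. -/
open Finset

theorem exists_excess_aux (ℓ : ℕ) (α : ℝ) (Q : ℕ → ℝ) :
    ∃ e : ℕ → ℝ, e ℓ = 0 ∧ ∀ k, k + 1 ≤ ℓ →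
      e k = max 0 ((Q (k + 1) + e (k + 1)) / (1 + α) - Q k) := by
  let f : ℕ → ℝ := fun n => Nat.rec (motive := fun _ => ℝ) 0
    (fun n x => max 0 ((Q (ℓ - n) + x) / (1 + α) - Q (ℓ - n - 1))) n
  refine ⟨fun k => f (ℓ - k), by simp [f], fun k hk => ?_⟩
  obtain ⟨n, rfl⟩ := Nat.exists_eq_add_of_le hk
  have h1 : k + 1 + n - k = n + 1 := by omega
  have h2 : k + 1 + n - (k + 1) = n := by omega
  have h3 : k + 1 + n - n = k + 1 := by omega
  simp only [h1, h2]
  change max 0 ((Q (k + 1 + n - n) + f n) / (1 + α) - Q (k + 1 + n - n - 1)) = _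
  rw [h3]
  simp

/-- If a distribution `Q` over `[ℓ]` is `ε`-far in total variation distance from every
distribution satisfying the exponential property with parameter `α`, then
`Σ_{i=2}^ℓ max(0, q_i − (1+α)·q_{i−1}) ≥ α·ε/2`. -/
theorem sum_max_violation_ge_of_far_from_exponential
    (ℓ : ℕ) (hℓ : 2 ≤ ℓ) (ε α : ℝ) (hε0 : 0 < ε) (hε1 : ε ≤ 1 / 2)
    (hα0 : 0 < α) (hα1 : α ≤ 1 / 2)
    (Q : ℕ → ℝ) (hQ0 : ∀ i ∈ Icc 1 ℓ, 0 ≤ Q i) (hQ1 : ∑ i ∈ Icc 1 ℓ, Q i = 1)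
    (hfar : ∀ Q' : ℕ → ℝ, (∀ i ∈ Icc 1 ℓ, 0 ≤ Q' i) → (∑ i ∈ Icc 1 ℓ, Q' i = 1) →
      (∀ k, 1 ≤ k → k + 1 ≤ ℓ → Q' (k + 1) ≤ (1 + α) * Q' k) →
      ε ≤ (1 / 2) * ∑ i ∈ Icc 1 ℓ, |Q i - Q' i|) :
    α * ε / 2 ≤ ∑ i ∈ Icc 2 ℓ, max 0 (Q i - (1 + α) * Q (i - 1)) := by
  obtain ⟨e, he0, he⟩ := exists_excess_aux ℓ α Q
  have ha : (0:ℝ) < 1 + α := by linarith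
  have hen : ∀ k ∈ Icc 1 ℓ, 0 ≤ e k := by
    intro k hk
    rw [Finset.mem_Icc] at hk
    rcases eq_or_lt_of_le hk.2 with h | h
    · rw [h, he0]
    · rw [he k h]; exact le_max_left _ _
  set V := ∑ i ∈ Icc 2 ℓ, max 0 (Q i - (1 + α) * Q (i - 1)) with hV
  obtain ⟨E, hE⟩ : ∃ E, E = ∑ i ∈ Icc 1 ℓ, e i := ⟨_, rfl⟩
  have hE0 : 0 ≤ E := hE ▸ Finset.sum_nonneg hen
  have hic : ∀ a, Icc a ℓ = Ico a (ℓ + 1) := by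
    intro a; ext x; simp only [Finset.mem_Icc, Finset.mem_Ico]; omega
  have hEtop : E = ∑ i ∈ Ico 1 ℓ, e i := by
    rw [hE, hic, Finset.sum_Ico_succ_top (by omega), he0, add_zero]
  have hEbot : E = e 1 + ∑ i ∈ Ico 1 ℓ, e (i + 1) := by
    rw [hE, hic, Finset.sum_eq_sum_Ico_succ_bot (by omega), Finset.sum_Ico_add']
  have hVs : V = ∑ i ∈ Ico 1 ℓ, max 0 (Q (i + 1) - (1 + α) * Q i) := by
    have := Finset.sum_Ico_add' (fun i => max 0 (Q i - (1 + α) * Q (i - 1))) 1 ℓ 1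
    rw [hV, hic, ← this]
    simp
  have hkey : (1 + α) * E ≤ V + ∑ i ∈ Ico 1 ℓ, e (i + 1) := by
    rw [hVs, hEtop, Finset.mul_sum, ← Finset.sum_add_distrib]
    refine Finset.sum_le_sum fun k hk => ?_
    rw [Finset.mem_Ico] at hk
    have h1 := hen (k + 1) (by rw [Finset.mem_Icc]; omega)
    have h2 := le_max_left 0 (Q (k + 1) - (1 + α) * Q k)
    have h3 := le_max_right 0 (Q (k + 1) - (1 + α) * Q k)
    rw [he k hk.2]
    rcases max_cases 0 ((Q (k + 1) + e (k + 1)) / (1 + α) - Q k) with h | h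
    · rw [h.1]; linarith
    · rw [h.1, mul_sub, mul_div_cancel₀ _ ha.ne']; linarith
  have he1 := hen 1 (by rw [Finset.mem_Icc]; omega)
  have hEV : α * E ≤ V := by linarith
  have hR : ∑ i ∈ Icc 1 ℓ, (Q i + e i) = 1 + E := by
    rw [Finset.sum_add_distrib, hQ1, hE]
  have hpos : 0 < 1 + E := by linarith
  have hf := hfar (fun i => (Q i + e i) / (1 + E))
    (fun i hi => div_nonneg (add_nonneg (hQ0 i hi) (hen i hi)) hpos.le)
    (by rw [← Finset.sum_div, hR, div_self hpos.ne'])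
    (by
      intro k h1 h2
      have h3 := le_max_right 0 ((Q (k + 1) + e (k + 1)) / (1 + α) - Q k)
      rw [← he k h2, sub_le_iff_le_add, div_le_iff₀ ha] at h3
      rw [← mul_div_assoc]
      exact div_le_div_of_nonneg_right (by linarith) hpos.le)
  have hs : ∑ i ∈ Icc 1 ℓ, |Q i - (Q i + e i) / (1 + E)| ≤
      ∑ i ∈ Icc 1 ℓ, (e i + (Q i + e i) * (E / (1 + E))) := by
    refine Finset.sum_le_sum fun i hi => ?_
    have h1 := hen i hi
    have h2 : 0 ≤ (Q i + e i) * (E / (1 + E)) :=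
      mul_nonneg (add_nonneg (hQ0 i hi) h1) (div_nonneg hE0 hpos.le)
    have h3 : Q i - (Q i + e i) / (1 + E) = (Q i + e i) * (E / (1 + E)) - e i := by
      field_simp; ring
    rw [h3, abs_le]
    constructor <;> linarith
  rw [Finset.sum_add_distrib, ← Finset.sum_mul, hR, ← hE, mul_div_cancel₀ _ hpos.ne'] at hs
  have hεE : ε ≤ E := by linarith
  have := mul_le_mul_of_nonneg_left hεE hα0.le
  have := mul_pos hα0 hε0
  linarith
end

section
/- Let α > 0, let ℓ ≥ 1, and let q_1, …, q_ℓ be nonnegative reals. Define q'_i = max_{i ≤ s ≤ ℓ} q_s/(1+α)^{s−i} for each 1 ≤ i ≤ ℓ. Then: (i) q_i ≤ q'_i for all i; (ii) q'_i ≤ (1+α)·q'_{i−1} for all 2 ≤ i ≤ ℓ; and (iii) α·Σ_{i=1}^ℓ (q'_i − q_i) ≤ Σ_{i=2}^ℓ max(0, q_i − (1+α)·q_{i−1}). -/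
open Finset

/-- For nonnegative reals `q_1, …, q_ℓ` and `q'_i = max_{i ≤ s ≤ ℓ} q_s/(1+α)^(s−i)`:
(i) `q_i ≤ q'_i`; (ii) `q'_i ≤ (1+α)·q'_{i−1}` for `2 ≤ i ≤ ℓ`; and
(iii) `α·Σ_{i=1}^ℓ (q'_i − q_i) ≤ Σ_{i=2}^ℓ max(0, q_i − (1+α)·q_{i−1})`. -/
theorem upper_envelope_properties
    (ℓ : ℕ) (hℓ : 1 ≤ ℓ) (α : ℝ) (hα : 0 < α)
    (q q' : ℕ → ℝ) (hq0 : ∀ i ∈ Icc 1 ℓ, 0 ≤ q i)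
    (hq' : ∀ i, ∀ (_ : 1 ≤ i) (h2 : i ≤ ℓ),
      q' i = (Icc i ℓ).sup' (Finset.nonempty_Icc.mpr h2)
        (fun s => q s / (1 + α) ^ (s - i))) :
    (∀ i ∈ Icc 1 ℓ, q i ≤ q' i) ∧
    (∀ i, 2 ≤ i → i ≤ ℓ → q' i ≤ (1 + α) * q' (i - 1)) ∧
    α * ∑ i ∈ Icc 1 ℓ, (q' i - q i) ≤ ∑ i ∈ Icc 2 ℓ, max 0 (q i - (1 + α) * q (i - 1)) := by
  have ha : 0 < 1 + α := by linarith
  have h1 : ∀ i, 1 ≤ i → i ≤ ℓ → q i ≤ q' i := by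
    intro i hi hl
    rw [hq' i hi hl]
    have := Finset.le_sup' (fun s => q s / (1 + α) ^ (s - i)) (Finset.left_mem_Icc.mpr hl)
    simp only [Nat.sub_self, pow_zero, div_one] at this
    exact this
  have h2 : ∀ i, 1 ≤ i → i + 1 ≤ ℓ → q' (i + 1) ≤ (1 + α) * q' i := by
    intro i hi hl
    rw [hq' (i + 1) (by omega) hl]
    apply Finset.sup'_le
    intro s hs
    rw [Finset.mem_Icc] at hs
    rw [hq' i hi (by omega)]
    have := Finset.le_sup' (fun s => q s / (1 + α) ^ (s - i))
      (Finset.mem_Icc.mpr ⟨by omega, hs.2⟩ : s ∈ Icc i ℓ)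
    refine le_trans (le_of_eq ?_) (mul_le_mul_of_nonneg_left this ha.le)
    have e : s - i = (s - (i + 1)) + 1 := by omega
    simp only [e, pow_succ]
    field_simp
  have h3 : ∀ i, 1 ≤ i → i + 1 ≤ ℓ → q' i ≤ max (q i) (q' (i + 1) / (1 + α)) := by
    intro i hi hl
    rw [hq' i hi (by omega)]
    apply Finset.sup'_le
    intro s hs
    rw [Finset.mem_Icc] at hs
    rcases Nat.eq_or_lt_of_le hs.1 with h | h
    · subst h
      simp
    · apply le_max_of_le_right
      rw [hq' (i + 1) (by omega) hl]
      have := Finset.le_sup' (fun s => q s / (1 + α) ^ (s - (i + 1)))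
        (Finset.mem_Icc.mpr ⟨h, hs.2⟩ : s ∈ Icc (i + 1) ℓ)
      refine le_trans (le_of_eq ?_) (div_le_div_of_nonneg_right this ha.le)
      have e : s - i = (s - (i + 1)) + 1 := by omega
      simp only [e, pow_succ]
      field_simp
  have h4 : ∀ i, 1 ≤ i → i + 1 ≤ ℓ → (1 + α) * (q' i - q i) ≤
      (q' (i + 1) - q (i + 1)) + max 0 (q (i + 1) - (1 + α) * q i) := by
    intro i hi hl
    have a := h1 (i + 1) (by omega) hl
    have b := le_max_left 0 (q (i + 1) - (1 + α) * q i)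
    have c := le_max_right 0 (q (i + 1) - (1 + α) * q i)
    rcases le_max_iff.mp (h3 i hi hl) with h | h
    · have : (1 + α) * (q' i - q i) ≤ 0 :=
        mul_nonpos_of_nonneg_of_nonpos ha.le (by linarith)
      linarith
    · rw [le_div_iff₀ ha] at h
      linarith
  have hl0 : q' ℓ = q ℓ := by
    rw [hq' ℓ hℓ le_rfl]
    simp
  have h5 : ∀ n, 1 ≤ n → n ≤ ℓ → α * ∑ i ∈ Icc 1 n, (q' i - q i) ≤
      (1 + α) * (q' n - q n) + ∑ i ∈ Icc 2 n, max 0 (q i - (1 + α) * q (i - 1)) := by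
    intro n hn
    induction n, hn using Nat.le_induction with
    | base =>
      intro hl
      have := h1 1 le_rfl hl
      simp
      linarith
    | succ n hn ih =>
      intro hl
      have := ih (by omega)
      have k := h4 n hn hl
      rw [Finset.sum_Icc_succ_top (by omega), Finset.sum_Icc_succ_top (by omega)]
      simp only [Nat.add_sub_cancel]
      linarith
  refine ⟨fun i hi => h1 i (Finset.mem_Icc.mp hi).1 (Finset.mem_Icc.mp hi).2, ?_, ?_⟩
  · intro i hi hl
    obtain ⟨j, rfl⟩ : ∃ j, i = j + 1 := ⟨i - 1, by omega⟩
    exact h2 j (by omega) hl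
  · have := h5 ℓ hℓ le_rfl
    rw [hl0] at this
    simpa using this
end

section
/- Let α > 0, let ℓ ≥ 1, let Q be a distribution over [ℓ] with q_i = Q(i), and let q'_1, …, q'_ℓ be reals with q_i ≤ q'_i for all i and q'_i ≤ (1+α)·q'_{i−1} for all 2 ≤ i ≤ ℓ; set ρ = Σ_{i=1}^ℓ (q'_i − q_i). Then there exists a distribution Q'' over [ℓ] satisfying the exponential property with parameter α such that d_TV(Q, Q'') ≤ ρ. -/
open Finset

/-- If `Q` is a distribution over `[ℓ]` dominated by a sequence `q'` which satisfies the
exponential property with parameter `α`, and `ρ = Σ (q'_i − q_i)`, then there is a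
distribution `Q''` over `[ℓ]` satisfying the exponential property with
`d_TV(Q, Q'') ≤ ρ`. -/
theorem exists_exponential_close
    (ℓ : ℕ) (hℓ : 1 ≤ ℓ) (α : ℝ) (hα : 0 < α)
    (Q : ℕ → ℝ) (hQ0 : ∀ i ∈ Icc 1 ℓ, 0 ≤ Q i) (hQ1 : ∑ i ∈ Icc 1 ℓ, Q i = 1)
    (q' : ℕ → ℝ) (hdom : ∀ i ∈ Icc 1 ℓ, Q i ≤ q' i)
    (hexp : ∀ i, 2 ≤ i → i ≤ ℓ → q' i ≤ (1 + α) * q' (i - 1))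
    (ρ : ℝ) (hρ : ρ = ∑ i ∈ Icc 1 ℓ, (q' i - Q i)) :
    ∃ Q'' : ℕ → ℝ, (∀ i ∈ Icc 1 ℓ, 0 ≤ Q'' i) ∧ (∑ i ∈ Icc 1 ℓ, Q'' i = 1) ∧
      (∀ k, 1 ≤ k → k + 1 ≤ ℓ → Q'' (k + 1) ≤ (1 + α) * Q'' k) ∧
      (1 / 2) * ∑ i ∈ Icc 1 ℓ, |Q i - Q'' i| ≤ ρ := by
  have hS : ∑ i ∈ Icc 1 ℓ, q' i = 1 + ρ := by
    rw [hρ, sum_sub_distrib, hQ1]; ring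
  have hρ0 : 0 ≤ ρ := by
    rw [hρ]
    exact sum_nonneg fun i hi => sub_nonneg.2 (hdom i hi)
  have hpos : 0 < 1 + ρ := by linarith
  have hsum : ∑ i ∈ Icc 1 ℓ, q' i / (1 + ρ) = 1 := by
    rw [← sum_div, hS, div_self hpos.ne']
  refine ⟨fun i => q' i / (1 + ρ), ?_, hsum, ?_, ?_⟩
  · intro i hi
    exact div_nonneg ((hQ0 i hi).trans (hdom i hi)) hpos.le
  · intro k hk hk'
    have h := hexp (k + 1) (by omega) hk'
    rw [Nat.add_sub_cancel] at h
    show q' (k + 1) / (1 + ρ) ≤ (1 + α) * (q' k / (1 + ρ))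
    rw [← mul_div_assoc]
    exact div_le_div_of_nonneg_right h hpos.le
  · have hb : ∑ i ∈ Icc 1 ℓ, |Q i - q' i / (1 + ρ)|
        ≤ ∑ i ∈ Icc 1 ℓ, ((q' i - Q i) + (q' i - q' i / (1 + ρ))) := by
      refine sum_le_sum fun i hi => ?_
      have h1 := hdom i hi
      have h2 : q' i / (1 + ρ) ≤ q' i :=
        div_le_self ((hQ0 i hi).trans h1) (by linarith)
      rw [abs_le]
      constructor <;> linarith
    rw [sum_add_distrib, ← hρ, sum_sub_distrib, hS, hsum] at hb
    show (1 / 2) * ∑ i ∈ Icc 1 ℓ, |Q i - q' i / (1 + ρ)| ≤ ρ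
    linarith
end

section
/- Let X be a random variable on a probability space with 0 ≤ X ≤ 1 almost surely, and suppose E[X] ≥ ε for some 0 < ε ≤ 1. Then there exist nonnegative integers a and b such that 2^{−a} ≥ ε/8, 2^{−a}·2^{−b} ≥ ε/(8·⌈log₂(4/ε)⌉), and P(X ≥ 2^{−a}) ≥ 2^{−b}. -/
open MeasureTheory

lemma pointwise_layer (x : ℝ) (hx : x ≤ 1) (n : ℕ) :
    x ≤ (1 / 2 : ℝ) ^ n + ∑ a ∈ Finset.range n,
      (if (1 / 2 : ℝ) ^ (a + 1) ≤ x then (1 / 2 : ℝ) ^ (a + 1) else 0) := by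
  induction n with
  | zero => simpa using hx
  | succ n ih =>
    rw [Finset.sum_range_succ]
    split_ifs with h
    · have : (1 / 2 : ℝ) ^ n = (1 / 2 : ℝ) ^ (n + 1) + (1 / 2 : ℝ) ^ (n + 1) := by ring
      linarith
    · have : 0 ≤ ∑ a ∈ Finset.range n,
          (if (1 / 2 : ℝ) ^ (a + 1) ≤ x then (1 / 2 : ℝ) ^ (a + 1) else 0) :=
        Finset.sum_nonneg fun i _ => by split_ifs <;> positivity
      linarith [not_le.1 h]

/-- Reverse-Markov layering: if `0 ≤ X ≤ 1` a.s. and `E[X] ≥ ε`, then there are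
nonnegative integers `a, b` with `2^(−a) ≥ ε/8`,
`2^(−a)·2^(−b) ≥ ε/(8·⌈log₂(4/ε)⌉)`, and `P(X ≥ 2^(−a)) ≥ 2^(−b)`. -/
theorem exists_level_of_expectation_ge
    {Ω : Type*} [MeasurableSpace Ω] (μ : Measure Ω) [IsProbabilityMeasure μ]
    (X : Ω → ℝ) (hX : Measurable X)
    (hbdd : ∀ᵐ ω ∂μ, X ω ∈ Set.Icc (0 : ℝ) 1)
    (ε : ℝ) (hε0 : 0 < ε) (hε1 : ε ≤ 1)
    (hE : ε ≤ ∫ ω, X ω ∂μ) :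
    ∃ a b : ℕ, ε / 8 ≤ (1 / 2 : ℝ) ^ a ∧
      ε / (8 * (⌈Real.logb 2 (4 / ε)⌉ : ℝ)) ≤ (1 / 2 : ℝ) ^ a * (1 / 2 : ℝ) ^ b ∧
      (1 / 2 : ℝ) ^ b ≤ (μ {ω | (1 / 2 : ℝ) ^ a ≤ X ω}).toReal := by
  have hlog : 2 ≤ Real.logb 2 (4 / ε) := by
    rw [Real.le_logb_iff_rpow_le (by norm_num) (by positivity), le_div_iff₀ hε0]
    norm_num
    linarith
  obtain ⟨L, hL⟩ : ∃ L : ℕ, ⌈Real.logb 2 (4 / ε)⌉ = (L : ℤ) :=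
    Int.eq_ofNat_of_zero_le (Int.ceil_nonneg (by linarith))
  have hle := Int.le_ceil (Real.logb 2 (4 / ε))
  have hlt := Int.ceil_lt_add_one (Real.logb 2 (4 / ε))
  rw [hL] at hle hlt ⊢
  push_cast at hle hlt ⊢
  have hL0 : (0 : ℝ) < L := by linarith
  have h1 : 4 / ε ≤ 2 ^ L := by
    rw [Real.logb_le_iff_le_rpow (by norm_num) (by positivity)] at hle
    simpa using hle
  have h2 : (2 : ℝ) ^ L < 8 / ε := by
    have : (L : ℝ) - 1 < Real.logb 2 (4 / ε) := by linarith
    rw [Real.lt_logb_iff_rpow_lt (by norm_num) (by positivity),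
      Real.rpow_sub (by norm_num)] at this
    simp only [Real.rpow_natCast, Real.rpow_one] at this
    have e : 8 / ε = 2 * (4 / ε) := by ring
    linarith
  have h3 : (1 / 2 : ℝ) ^ L ≤ ε / 4 := by
    rw [div_pow, one_pow, div_le_iff₀ (by positivity)]
    rw [div_le_iff₀ hε0] at h1
    linarith
  have h4 : ε / 8 ≤ (1 / 2 : ℝ) ^ L := by
    rw [div_pow, one_pow, le_div_iff₀ (by positivity)]
    rw [lt_div_iff₀ hε0] at h2
    linarith
  have hm : ∀ a : ℕ, MeasurableSet {ω | (1 / 2 : ℝ) ^ a ≤ X ω} := fun a =>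
    measurableSet_le measurable_const hX
  have hXi : Integrable X μ := by
    refine Integrable.of_bound hX.aestronglyMeasurable 1 ?_
    filter_upwards [hbdd] with ω h
    rw [Real.norm_eq_abs, abs_of_nonneg h.1]
    exact h.2
  have hI : ∀ a : ℕ, Integrable
      ({ω | (1 / 2 : ℝ) ^ a ≤ X ω}.indicator fun _ => (1 / 2 : ℝ) ^ a) μ := fun a =>
    (integrable_const _).indicator (hm a)
  have key : ε ≤ (1 / 2 : ℝ) ^ L + ∑ a ∈ Finset.range L,
      (1 / 2 : ℝ) ^ (a + 1) * (μ {ω | (1 / 2 : ℝ) ^ (a + 1) ≤ X ω}).toReal := by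
    have hmono : ∫ ω, X ω ∂μ ≤ ∫ ω, ((1 / 2 : ℝ) ^ L + ∑ a ∈ Finset.range L,
        ({ω | (1 / 2 : ℝ) ^ (a + 1) ≤ X ω}.indicator fun _ => (1 / 2 : ℝ) ^ (a + 1)) ω) ∂μ := by
      refine integral_mono_ae hXi
        ((integrable_const _).add (integrable_finsetSum _ fun a _ => hI (a + 1))) ?_
      filter_upwards [hbdd] with ω h
      simpa [Set.indicator_apply] using pointwise_layer (X ω) h.2 L
    rw [integral_add (integrable_const _) (integrable_finsetSum _ fun a _ => hI (a + 1)),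
      integral_finsetSum _ fun a _ => hI (a + 1)] at hmono
    simp only [integral_indicator_const _ (hm _), integral_const, smul_eq_mul, probReal_univ,
      one_mul, Measure.real] at hmono
    refine hE.trans (hmono.trans (le_of_eq ?_))
    simp [mul_comm]
  obtain ⟨a, ha, hal⟩ : ∃ a ∈ Finset.range L, 3 * ε / (4 * L) ≤
      (1 / 2 : ℝ) ^ (a + 1) * (μ {ω | (1 / 2 : ℝ) ^ (a + 1) ≤ X ω}).toReal := by
    apply Finset.exists_le_of_sum_le
    · have : 0 < L := by exact_mod_cast hL0
      exact ⟨0, by simpa using this⟩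
    · rw [Finset.sum_const, Finset.card_range, nsmul_eq_mul]
      have : (L : ℝ) * (3 * ε / (4 * L)) = 3 * ε / 4 := by field_simp
      linarith
  set p := (μ {ω | (1 / 2 : ℝ) ^ (a + 1) ≤ X ω}).toReal with hp
  have hpos : 0 < p := by
    have : 0 < (1 / 2 : ℝ) ^ (a + 1) * p := lt_of_lt_of_le (by positivity) hal
    exact pos_of_mul_pos_right this (by positivity)
  have hp1 : p ≤ 1 := measureReal_le_one
  obtain ⟨b, hb1, hb2⟩ := exists_nat_pow_near_of_lt_one hpos hp1
    (by norm_num : (0 : ℝ) < 1 / 2) (by norm_num)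
  refine ⟨a + 1, b + 1, ?_, ?_, hb1.le⟩
  · refine h4.trans (pow_le_pow_of_le_one (by norm_num) (by norm_num) ?_)
    have := Finset.mem_range.1 ha
    omega
  · have h5 : (1 / 2 : ℝ) ^ (a + 1) * p ≤ (1 / 2 : ℝ) ^ (a + 1) * (1 / 2 : ℝ) ^ b := by gcongr
    have h6 : (1 / 2 : ℝ) ^ (a + 1) * (1 / 2 : ℝ) ^ (b + 1)
      = ((1 / 2 : ℝ) ^ (a + 1) * (1 / 2 : ℝ) ^ b) / 2 := by ring
    have h7 : ε / (8 * L) = (3 * ε / (4 * L)) / 6 := by field_simp; norm_num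
    have h8 : 0 < 3 * ε / (4 * L) := by positivity
    rw [h6, h7]
    linarith
end

section
/- Let m ≥ 1, let P and P* be distributions over [m] with 1/(2m) ≤ P*(i) ≤ 2/m for all i ∈ [m], and suppose d_TV(P, P*) ≥ ε. Then (1/m)·Σ_{i=1}^m Σ_{j=1}^m P(i)·|P(i)/(P(i)+P(j)) − P*(i)/(P*(i)+P*(j))| ≥ ε/16, where a summand with P(i)+P(j) = 0 is interpreted as 0 (note such a summand has weight P(i) = 0). Equivalently, if i is drawn from P and j is drawn uniformly from [m], then E|P(i)/(P(i)+P(j)) − P*(i)/(P*(i)+P*(j))| ≥ ε/16. -/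
open Finset

lemma pair_aux (p r a b M : ℝ) (hp : 0 ≤ p) (hr : 0 ≤ r) (ha : 0 < a) (hb : 0 < b)
    (hM : 0 < M) (hab : a + b ≤ 4 / M) :
    M / 4 * |p * b - r * a| ≤
      p * |p / (p + r) - a / (a + b)| + r * |r / (r + p) - b / (b + a)| := by
  rcases eq_or_lt_of_le (add_nonneg hp hr) with h | h
  · have h1 : p = 0 := by linarith
    have h2 : r = 0 := by linarith
    simp [h1, h2]
  · have hs : 0 < a + b := by linarith
    have e1 : p / (p + r) - a / (a + b) = (p * b - r * a) / ((p + r) * (a + b)) := by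
      field_simp; ring
    have e2 : r / (r + p) - b / (b + a) = -((p * b - r * a) / ((p + r) * (a + b))) := by
      rw [add_comm r p, add_comm b a]; field_simp; ring
    rw [e1, e2, abs_neg, ← add_mul, abs_div, abs_of_pos (mul_pos h hs)]
    have e3 : (p + r) * (|p * b - r * a| / ((p + r) * (a + b)))
        = 1 / (a + b) * |p * b - r * a| := by field_simp
    rw [e3]
    apply mul_le_mul_of_nonneg_right _ (abs_nonneg _)
    rw [le_div_iff₀ hs]
    rw [le_div_iff₀ hM] at hab
    nlinarith

/-- If `P*` has all probabilities in `[1/(2m), 2/m]` and `d_TV(P, P*) ≥ ε`, then for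
`i ~ P` and `j` uniform on `[m]`,
`E|P(i)/(P(i)+P(j)) − P*(i)/(P*(i)+P*(j))| ≥ ε/16` (division by zero taken as `0`). -/
theorem expected_pair_discrepancy_ge
    (m : ℕ) (hm : 1 ≤ m) (ε : ℝ) (P Ps : ℕ → ℝ)
    (hP0 : ∀ i ∈ Icc 1 m, 0 ≤ P i) (hP1 : ∑ i ∈ Icc 1 m, P i = 1)
    (hPs0 : ∀ i ∈ Icc 1 m, 0 ≤ Ps i) (hPs1 : ∑ i ∈ Icc 1 m, Ps i = 1)
    (hlow : ∀ i ∈ Icc 1 m, 1 / (2 * m) ≤ Ps i) (hhigh : ∀ i ∈ Icc 1 m, Ps i ≤ 2 / m)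
    (hfar : ε ≤ (1 / 2) * ∑ i ∈ Icc 1 m, |P i - Ps i|) :
    ε / 16 ≤ (1 / (m : ℝ)) * ∑ i ∈ Icc 1 m, ∑ j ∈ Icc 1 m,
      P i * |P i / (P i + P j) - Ps i / (Ps i + Ps j)| := by
  have hM : (0 : ℝ) < m := by exact_mod_cast hm
  have hpos : ∀ i ∈ Icc 1 m, 0 < Ps i := fun i hi =>
    lt_of_lt_of_le (by positivity) (hlow i hi)
  set T : ℝ := ∑ i ∈ Icc 1 m, ∑ j ∈ Icc 1 m,
      P i * |P i / (P i + P j) - Ps i / (Ps i + Ps j)| with hT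
  have hT2 : T + T = ∑ i ∈ Icc 1 m, ∑ j ∈ Icc 1 m,
      (P i * |P i / (P i + P j) - Ps i / (Ps i + Ps j)|
        + P j * |P j / (P j + P i) - Ps j / (Ps j + Ps i)|) := by
    simp only [sum_add_distrib]
    congr 1
    rw [hT, sum_comm]
  have h1 : ∑ i ∈ Icc 1 m, ∑ j ∈ Icc 1 m, (m : ℝ) / 4 * |P i * Ps j - P j * Ps i| ≤ T + T := by
    rw [hT2]
    refine sum_le_sum fun i hi => sum_le_sum fun j hj => ?_
    refine pair_aux _ _ _ _ _ (hP0 i hi) (hP0 j hj) (hpos i hi) (hpos j hj) hM ?_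
    have := hhigh i hi
    have := hhigh j hj
    have : (4 : ℝ) / m = 2 / m + 2 / m := by ring
    linarith
  have h2 : (m : ℝ) / 4 * ∑ i ∈ Icc 1 m, |P i - Ps i| ≤ T + T := by
    refine le_trans ?_ h1
    rw [mul_sum]
    refine sum_le_sum fun i hi => ?_
    rw [← mul_sum]
    refine mul_le_mul_of_nonneg_left ?_ (by positivity)
    have : P i - Ps i = ∑ j ∈ Icc 1 m, (P i * Ps j - P j * Ps i) := by
      rw [sum_sub_distrib, ← mul_sum, ← sum_mul, hP1, hPs1]; ring
    rw [this]
    exact abs_sum_le_sum_abs _ _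
  have h3 : 0 ≤ ∑ i ∈ Icc 1 m, |P i - Ps i| := sum_nonneg fun _ _ => abs_nonneg _
  rw [one_div_mul_eq_div, le_div_iff₀ hM]
  nlinarith [mul_nonneg hM.le h3, mul_le_mul_of_nonneg_right hfar hM.le]
end

section
/- Let m ≥ 1, let P and P* be distributions over [m] with 0 < P*(i) ≤ 2/m for all i ∈ [m], and suppose Σ_{i=1}^m |P(i) − P*(i)| ≥ 2ε. Writing r_i = P(i)/P*(i), we have Σ_{i=1}^m Σ_{j=1}^m |r_i − r_j| ≥ ε·m²/2. -/
open Finset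

/-- If `0 < P*(i) ≤ 2/m` for all `i` and `Σ |P(i) − P*(i)| ≥ 2ε`, then with
`r_i = P(i)/P*(i)` we have `Σ_i Σ_j |r_i − r_j| ≥ ε·m²/2`. -/
theorem sum_abs_ratio_differences_ge
    (m : ℕ) (hm : 1 ≤ m) (ε : ℝ) (P Ps : ℕ → ℝ)
    (hP0 : ∀ i ∈ Icc 1 m, 0 ≤ P i) (hP1 : ∑ i ∈ Icc 1 m, P i = 1)
    (hPs0 : ∀ i ∈ Icc 1 m, 0 < Ps i) (hPs1 : ∑ i ∈ Icc 1 m, Ps i = 1)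
    (hhigh : ∀ i ∈ Icc 1 m, Ps i ≤ 2 / m)
    (hfar : 2 * ε ≤ ∑ i ∈ Icc 1 m, |P i - Ps i|) :
    ε * (m : ℝ) ^ 2 / 2 ≤ ∑ i ∈ Icc 1 m, ∑ j ∈ Icc 1 m, |P i / Ps i - P j / Ps j| := by
  have hm0 : (0 : ℝ) < m := by exact_mod_cast hm
  have key : ∀ i ∈ Icc 1 m, |P i - Ps i| ≤
      ∑ j ∈ Icc 1 m, (2 / (m : ℝ)) * (2 / (m : ℝ)) * |P i / Ps i - P j / Ps j| := by
    intro i hi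
    have hi0 := hPs0 i hi
    have e : P i - Ps i = ∑ j ∈ Icc 1 m, Ps i * Ps j * (P i / Ps i - P j / Ps j) := by
      have : ∀ j ∈ Icc 1 m, Ps i * Ps j * (P i / Ps i - P j / Ps j)
          = P i * Ps j - Ps i * P j := by
        intro j hj
        have hj0 := hPs0 j hj
        field_simp
      rw [Finset.sum_congr rfl this, Finset.sum_sub_distrib, ← Finset.mul_sum, ← Finset.mul_sum,
        hP1, hPs1]
      ring
    rw [e]
    refine (Finset.abs_sum_le_sum_abs _ _).trans (Finset.sum_le_sum ?_)
    intro j hj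
    have hj0 := hPs0 j hj
    rw [abs_mul, abs_of_pos (mul_pos hi0 hj0)]
    exact mul_le_mul_of_nonneg_right
      (mul_le_mul (hhigh i hi) (hhigh j hj) hj0.le (by positivity)) (abs_nonneg _)
  have h := hfar.trans (Finset.sum_le_sum key)
  simp only [← Finset.mul_sum] at h
  generalize (∑ i ∈ Icc 1 m, ∑ j ∈ Icc 1 m, |P i / Ps i - P j / Ps j|) = S at h ⊢
  have h2 := mul_le_mul_of_nonneg_right h (sq_nonneg (m : ℝ))
  have h3 : 2 / (m : ℝ) * (2 / (m : ℝ)) * S * (m : ℝ) ^ 2 = 4 * S := by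
    field_simp
    ring
  linarith
end

section
/- Let 0 < ε ≤ 1, let D and D* be distributions over [N], and let K = ⌈log₂(10N/ε)⌉. For 1 ≤ k ≤ K define S_k = {i ∈ [N] : 2^{−k} < D*(i) ≤ 2^{1−k}}, and let S_{K+1} = [N] \ (S_1 ∪ … ∪ S_K). Assume: (a) (1/2)·Σ_{k=1}^{K+1} |D(S_k) − D*(S_k)| ≤ ε/10; and (b) if D(S_{K+1}) > 0 then D*(S_{K+1}) > 0. Define D' over [N] by D'(i) = D(S_k)·D*(i)/D*(S_k) for i ∈ S_k whenever D*(S_k) > 0, and D'(i) = 0 otherwise. Then Σ_{k=1}^{K+1} Σ_{i∈S_k} Σ_{j∈S_k} (D(i)/|S_k|)·|D(i)/(D(i)+D(j)) − D*(i)/(D*(i)+D*(j))| ≥ (1/16)·(d_TV(D', D) − 3ε/10), where any summand whose denominator vanishes is interpreted as 0. -/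
open Finset

lemma aux_cover (T : Finset ℕ) (A : Finset ℕ) (S : ℕ → Finset ℕ) (f : ℕ → ℝ)
    (hf : ∀ i, 0 ≤ f i) (h : ∀ i ∈ A, ∃ k ∈ T, i ∈ S k) :
    ∑ i ∈ A, f i ≤ ∑ k ∈ T, ∑ i ∈ S k, f i := by
  classical
  have h1 : ∑ k ∈ T, ∑ i ∈ A, (if i ∈ S k then f i else 0) ≤ ∑ k ∈ T, ∑ i ∈ S k, f i := by
    apply Finset.sum_le_sum
    intro k _
    rw [← Finset.sum_filter]
    apply Finset.sum_le_sum_of_subset_of_nonneg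
    · intro i hi
      exact (Finset.mem_filter.1 hi).2
    · intro i _ _
      exact hf i
  refine le_trans ?_ h1
  rw [Finset.sum_comm]
  apply Finset.sum_le_sum
  intro i hi
  obtain ⟨k, hk, hik⟩ := h i hi
  have := Finset.single_le_sum (f := fun k => if i ∈ S k then f i else 0) (s := T)
    (fun k _ => by split_ifs; exact hf i; exact le_rfl) hk
  simpa [hik] using this

lemma aux_term (x y u v a m : ℝ) (hx : 0 ≤ x) (hy : 0 ≤ y) (ha : 0 < a) (hm : 0 ≤ m)
    (hu : a < u) (hu2 : u ≤ 2 * a) (hv : a < v) (hv2 : v ≤ 2 * a) :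
    |x * v - y * u| / (4 * a * m) ≤
      (if x + y = 0 ∨ u + v = 0 then 0 else (x / m) * |x / (x + y) - u / (u + v)|) +
      (if y + x = 0 ∨ v + u = 0 then 0 else (y / m) * |y / (y + x) - v / (v + u)|) := by
  have huv : 0 < u + v := by linarith
  by_cases h : x + y = 0
  · have hx0 : x = 0 := by linarith
    have hy0 : y = 0 := by linarith
    simp [hx0, hy0]
  · have hxy : 0 < x + y := lt_of_le_of_ne (by linarith) (Ne.symm h)
    rw [if_neg (by rintro (h1 | h1) <;> linarith [hxy, huv]),
      if_neg (by rintro (h1 | h1) <;> linarith [hxy, huv])]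
    have e1 : |x / (x + y) - u / (u + v)| = |x * v - y * u| / ((x + y) * (u + v)) := by
      rw [div_sub_div _ _ hxy.ne' huv.ne', abs_div, abs_of_pos (mul_pos hxy huv)]
      congr 2; ring
    have e2 : |y / (y + x) - v / (v + u)| = |x * v - y * u| / ((x + y) * (u + v)) := by
      rw [add_comm y x, add_comm v u, div_sub_div _ _ hxy.ne' huv.ne', abs_div,
        abs_of_pos (mul_pos hxy huv), abs_sub_comm (x * v)]
      congr 2; ring
    rw [e1, e2]
    have e3 : x / m * (|x * v - y * u| / ((x + y) * (u + v))) +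
        y / m * (|x * v - y * u| / ((x + y) * (u + v))) = |x * v - y * u| / ((u + v) * m) := by
      rcases hm.eq_or_lt with h0 | h0
      · simp [← h0]
      · field_simp
    rw [e3]
    rcases hm.eq_or_lt with h0 | h0
    · simp [← h0]
    · gcongr
      linarith

lemma aux_bucket (T : Finset ℕ) (D Ds D' : ℕ → ℝ) (a : ℝ) (ha : 0 < a)
    (hD : ∀ i ∈ T, 0 ≤ D i) (h1 : ∀ i ∈ T, a < Ds i) (h2 : ∀ i ∈ T, Ds i ≤ 2 * a)
    (hD' : ∀ i ∈ T, D' i = if 0 < ∑ j ∈ T, Ds j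
        then (∑ j ∈ T, D j) * Ds i / (∑ j ∈ T, Ds j) else 0) :
    (1 / 8) * ∑ i ∈ T, |D' i - D i| ≤ ∑ i ∈ T, ∑ j ∈ T,
        (if D i + D j = 0 ∨ Ds i + Ds j = 0 then 0
          else (D i / (T.card : ℝ)) *
            |D i / (D i + D j) - Ds i / (Ds i + Ds j)|) := by
  rcases T.eq_empty_or_nonempty with rfl | hne
  · simp
  set m : ℝ := (T.card : ℝ) with hm
  have hm0 : 0 < m := by rw [hm]; exact_mod_cast hne.card_pos
  have hMs : m * a ≤ ∑ j ∈ T, Ds j := by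
    have := Finset.card_nsmul_le_sum T Ds a (fun i hi => (h1 i hi).le)
    simpa [nsmul_eq_mul] using this
  set Ms := ∑ j ∈ T, Ds j with hMsd
  have hMs0 : 0 < Ms := lt_of_lt_of_le (mul_pos hm0 ha) hMs
  set g : ℕ → ℕ → ℝ := fun i j => (if D i + D j = 0 ∨ Ds i + Ds j = 0 then 0
          else (D i / m) * |D i / (D i + D j) - Ds i / (Ds i + Ds j)|) with hg
  have hsym : ∑ i ∈ T, ∑ j ∈ T, g i j = (1 / 2) * ∑ i ∈ T, ∑ j ∈ T, (g i j + g j i) := by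
    simp only [Finset.sum_add_distrib]
    rw [Finset.sum_comm (f := fun i j => g j i)]
    ring
  change _ ≤ ∑ i ∈ T, ∑ j ∈ T, g i j
  rw [hsym]
  have hi : ∀ i ∈ T, (1 / 4) * |D' i - D i| ≤ ∑ j ∈ T, (g i j + g j i) := by
    intro i hi
    have s1 : ∑ j ∈ T, |D i * Ds j - D j * Ds i| / (4 * a * m) ≤ ∑ j ∈ T, (g i j + g j i) :=
      Finset.sum_le_sum fun j hj => aux_term _ _ _ _ a m (hD i hi) (hD j hj) ha hm0.le
        (h1 i hi) (h2 i hi) (h1 j hj) (h2 j hj)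
    refine le_trans ?_ s1
    rw [← Finset.sum_div, le_div_iff₀ (by positivity)]
    refine le_trans ?_ (Finset.abs_sum_le_sum_abs _ _)
    rw [Finset.sum_sub_distrib, ← Finset.mul_sum, ← Finset.sum_mul, hD' i hi, if_pos hMs0,
      ← hMsd]
    have : D i * Ms - (∑ j ∈ T, D j) * Ds i
        = -(Ms * ((∑ j ∈ T, D j) * Ds i / Ms - D i)) := by
      field_simp; ring
    rw [this, abs_neg, abs_mul, abs_of_pos hMs0]
    nlinarith [abs_nonneg ((∑ j ∈ T, D j) * Ds i / Ms - D i)]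
  have := Finset.sum_le_sum hi
  rw [← Finset.mul_sum] at this
  linarith

lemma aux_last (T : Finset ℕ) (D Ds D' : ℕ → ℝ)
    (hD : ∀ i ∈ T, 0 ≤ D i) (hDs : ∀ i ∈ T, 0 ≤ Ds i)
    (hD' : ∀ i ∈ T, D' i = if 0 < ∑ j ∈ T, Ds j
        then (∑ j ∈ T, D j) * Ds i / (∑ j ∈ T, Ds j) else 0) :
    ∑ i ∈ T, |D' i - D i| ≤ 2 * ∑ i ∈ T, D i := by
  have hM : 0 ≤ ∑ i ∈ T, D i := Finset.sum_nonneg hD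
  have hn : ∀ i ∈ T, 0 ≤ D' i := by
    intro i hi
    rw [hD' i hi]
    split_ifs with h
    · exact div_nonneg (mul_nonneg hM (hDs i hi)) h.le
    · exact le_rfl
  have hs : ∑ i ∈ T, D' i ≤ ∑ i ∈ T, D i := by
    rw [Finset.sum_congr rfl hD']
    split_ifs with h
    · rw [← Finset.sum_div, ← Finset.mul_sum, mul_div_assoc, div_self h.ne', mul_one]
    · simpa using hM
  calc ∑ i ∈ T, |D' i - D i| ≤ ∑ i ∈ T, (D' i + D i) := by
        apply Finset.sum_le_sum
        intro i hi
        rw [abs_le]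
        constructor <;> linarith [hn i hi, hD i hi]
    _ ≤ _ := by rw [Finset.sum_add_distrib]; linarith

/-- Bucketing lower bound for the PAIRCOND identity tester: with `S_1, …, S_K` the dyadic
buckets of `D*`, `S_{K+1}` the leftover, and `D'` the bucket-flattened version of `D`, the
expected pair discrepancy (drawing `i ~ D`, then `j` uniform in the bucket of `i`) is at
least `(1/16)·(d_TV(D', D) − 3ε/10)`. -/
theorem bucketed_pair_discrepancy_ge
    (N : ℕ) (ε : ℝ) (hε0 : 0 < ε) (hε1 : ε ≤ 1)
    (D Ds : ℕ → ℝ)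
    (hD0 : ∀ i ∈ Icc 1 N, 0 ≤ D i) (hD1 : ∑ i ∈ Icc 1 N, D i = 1)
    (hDs0 : ∀ i ∈ Icc 1 N, 0 ≤ Ds i) (hDs1 : ∑ i ∈ Icc 1 N, Ds i = 1)
    (K : ℕ) (hK : (K : ℤ) = ⌈Real.logb 2 (10 * N / ε)⌉)
    (S : ℕ → Finset ℕ)
    (hS : ∀ k ∈ Icc 1 K, S k = (Icc 1 N).filter
      (fun i => (1 / 2 : ℝ) ^ k < Ds i ∧ Ds i ≤ 2 * (1 / 2 : ℝ) ^ k))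
    (hSlast : S (K + 1) = Icc 1 N \ (Icc 1 K).biUnion S)
    (ha : (1 / 2) * ∑ k ∈ Icc 1 (K + 1),
      |(∑ i ∈ S k, D i) - ∑ i ∈ S k, Ds i| ≤ ε / 10)
    (hb : 0 < ∑ i ∈ S (K + 1), D i → 0 < ∑ i ∈ S (K + 1), Ds i)
    (D' : ℕ → ℝ)
    (hD' : ∀ k ∈ Icc 1 (K + 1), ∀ i ∈ S k,
      D' i = if 0 < ∑ j ∈ S k, Ds j
        then (∑ j ∈ S k, D j) * Ds i / (∑ j ∈ S k, Ds j) else 0) :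
    (1 / 16) * ((1 / 2) * ∑ i ∈ Icc 1 N, |D' i - D i| - 3 * ε / 10) ≤
      ∑ k ∈ Icc 1 (K + 1), ∑ i ∈ S k, ∑ j ∈ S k,
        (if D i + D j = 0 ∨ Ds i + Ds j = 0 then 0
          else (D i / ((S k).card : ℝ)) *
            |D i / (D i + D j) - Ds i / (Ds i + Ds j)|) := by
  have hN : 0 < N := by
    rcases Nat.eq_zero_or_pos N with h | h
    · subst h; simp at hD1
    · exact h
  have hN' : (0 : ℝ) < N := by exact_mod_cast hN
  have hsub : ∀ k ∈ Icc 1 (K + 1), S k ⊆ Icc 1 N := by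
    intro k hk
    rw [Finset.mem_Icc] at hk
    by_cases h : k = K + 1
    · rw [h, hSlast]; exact Finset.sdiff_subset
    · rw [hS k (Finset.mem_Icc.2 ⟨hk.1, by omega⟩)]; exact Finset.filter_subset _ _
  have hK2 : (10 * N / ε : ℝ) ≤ 2 ^ K := by
    have h1 : Real.logb 2 (10 * N / ε) ≤ (K : ℝ) := by
      have := Int.le_ceil (Real.logb 2 (10 * N / ε))
      rw [← hK] at this
      exact_mod_cast this
    rw [Real.logb_le_iff_le_rpow (by norm_num) (by positivity)] at h1
    exact_mod_cast h1
  have hsmall : ∀ i ∈ S (K + 1), Ds i ≤ ε / (10 * N) := by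
    intro i hi
    rw [hSlast, Finset.mem_sdiff, Finset.mem_biUnion] at hi
    obtain ⟨hiN, hno⟩ := hi
    have hind : ∀ n, n ≤ K → Ds i ≤ (1 / 2 : ℝ) ^ n := by
      intro n
      induction n with
      | zero =>
        intro _
        rw [pow_zero, ← hDs1]
        exact Finset.single_le_sum hDs0 hiN
      | succ n ih =>
        intro hn
        by_contra hc
        push Not at hc
        apply hno
        have hmem : n + 1 ∈ Icc 1 K := Finset.mem_Icc.2 ⟨by omega, hn⟩
        refine ⟨n + 1, hmem, ?_⟩
        rw [hS _ hmem, Finset.mem_filter]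
        refine ⟨hiN, hc, ?_⟩
        have := ih (by omega)
        rw [pow_succ]
        linarith
    refine (hind K le_rfl).trans ?_
    rw [one_div, inv_pow, ← inv_div]
    exact inv_anti₀ (by positivity) hK2
  have hDsl : ∑ i ∈ S (K + 1), Ds i ≤ ε / 10 := by
    have hlast := hsub (K + 1) (by simp)
    have h1 := Finset.sum_le_card_nsmul _ _ _ hsmall
    have h2 : ((S (K + 1)).card : ℝ) ≤ N := by
      have := Finset.card_le_card hlast
      rw [Nat.card_Icc] at this
      exact_mod_cast this
    rw [nsmul_eq_mul] at h1
    refine h1.trans ?_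
    calc ((S (K + 1)).card : ℝ) * (ε / (10 * N)) ≤ N * (ε / (10 * N)) := by gcongr
      _ = ε / 10 := by field_simp
  have hDl : ∑ i ∈ S (K + 1), D i ≤ 3 * ε / 10 := by
    have h1 := Finset.single_le_sum
      (f := fun k => |(∑ i ∈ S k, D i) - ∑ i ∈ S k, Ds i|) (s := Icc 1 (K + 1))
      (fun k _ => abs_nonneg _) (show K + 1 ∈ Icc 1 (K + 1) by simp)
    have h2 := le_abs_self ((∑ i ∈ S (K + 1), D i) - ∑ i ∈ S (K + 1), Ds i)
    linarith
  have hcov : ∑ i ∈ Icc 1 N, |D' i - D i| ≤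
      ∑ k ∈ Icc 1 (K + 1), ∑ i ∈ S k, |D' i - D i| := by
    apply aux_cover _ _ _ (fun i => |D' i - D i|) (fun i => abs_nonneg _)
    intro i hi
    by_cases h : i ∈ (Icc 1 K).biUnion S
    · obtain ⟨k, hk, hik⟩ := Finset.mem_biUnion.1 h
      rw [Finset.mem_Icc] at hk
      exact ⟨k, Finset.mem_Icc.2 ⟨hk.1, by omega⟩, hik⟩
    · exact ⟨K + 1, by simp, by rw [hSlast]; exact Finset.mem_sdiff.2 ⟨hi, h⟩⟩
  have hl := aux_last (S (K + 1)) D Ds D' (fun i hi => hD0 i (hsub (K + 1) (by simp) hi))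
    (fun i hi => hDs0 i (hsub (K + 1) (by simp) hi)) (hD' (K + 1) (by simp))
  rw [Finset.sum_Icc_succ_top (by omega)] at hcov ⊢
  have hbk := Finset.sum_le_sum (s := Icc 1 K) (fun k hk =>
    aux_bucket (S k) D Ds D' ((1 / 2 : ℝ) ^ k) (by positivity)
      (fun i hi => by
        rw [hS k hk] at hi
        exact hD0 i (Finset.mem_filter.1 hi).1)
      (fun i hi => by
        rw [hS k hk] at hi
        exact (Finset.mem_filter.1 hi).2.1)
      (fun i hi => by
        rw [hS k hk] at hi
        exact (Finset.mem_filter.1 hi).2.2)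
      (hD' k (Finset.Icc_subset_Icc_right (by omega) hk)))
  rw [← Finset.mul_sum] at hbk
  have hpos : 0 ≤ ∑ k ∈ Icc 1 K, ∑ i ∈ S k, |D' i - D i| :=
    Finset.sum_nonneg fun k _ => Finset.sum_nonneg fun i _ => abs_nonneg _
  have hlast0 : 0 ≤ ∑ i ∈ S (K + 1), ∑ j ∈ S (K + 1),
        (if D i + D j = 0 ∨ Ds i + Ds j = 0 then 0
          else (D i / ((S (K + 1)).card : ℝ)) *
            |D i / (D i + D j) - Ds i / (Ds i + Ds j)|) := by
    refine Finset.sum_nonneg fun i hi => Finset.sum_nonneg fun j _ => ?_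
    have := hD0 i (hsub (K + 1) (by simp) hi)
    split_ifs
    · exact le_rfl
    · positivity
  linarith
end

section
/- Let D and D* be distributions over [N], and let S_1, …, S_m be a partition of [N] such that for every k, D*(S_k) > 0 whenever D(S_k) > 0. Define D' over [N] by D'(i) = D(S_k)·D*(i)/D*(S_k) for i ∈ S_k whenever D*(S_k) > 0, and D'(i) = 0 otherwise. Then D' is a distribution over [N], and d_TV(D*, D') = (1/2)·Σ_{k=1}^m |D*(S_k) − D(S_k)|. -/
open Finset

/-- If `S_1, …, S_m` partitions `[N]`, `D*(S_k) > 0` whenever `D(S_k) > 0`, and `D'` is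
obtained from `D*` by rescaling each part to have `D`-mass, then `D'` is a distribution
and `d_TV(D*, D') = (1/2)·Σ_k |D*(S_k) − D(S_k)|`. -/
theorem flattened_distribution_tv
    (N m : ℕ) (D Ds : ℕ → ℝ)
    (hD0 : ∀ i ∈ Icc 1 N, 0 ≤ D i) (hD1 : ∑ i ∈ Icc 1 N, D i = 1)
    (hDs0 : ∀ i ∈ Icc 1 N, 0 ≤ Ds i) (hDs1 : ∑ i ∈ Icc 1 N, Ds i = 1)
    (S : ℕ → Finset ℕ)
    (hdisj : ∀ k₁ ∈ Icc 1 m, ∀ k₂ ∈ Icc 1 m, k₁ ≠ k₂ → Disjoint (S k₁) (S k₂))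
    (hcover : (Icc 1 m).biUnion S = Icc 1 N)
    (hpos : ∀ k ∈ Icc 1 m, 0 < ∑ i ∈ S k, D i → 0 < ∑ i ∈ S k, Ds i)
    (D' : ℕ → ℝ)
    (hD' : ∀ k ∈ Icc 1 m, ∀ i ∈ S k,
      D' i = if 0 < ∑ j ∈ S k, Ds j
        then (∑ j ∈ S k, D j) * Ds i / (∑ j ∈ S k, Ds j) else 0) :
    (∀ i ∈ Icc 1 N, 0 ≤ D' i) ∧ (∑ i ∈ Icc 1 N, D' i = 1) ∧
    (1 / 2) * ∑ i ∈ Icc 1 N, |Ds i - D' i| =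
      (1 / 2) * ∑ k ∈ Icc 1 m, |(∑ i ∈ S k, Ds i) - ∑ i ∈ S k, D i| := by
  have hpd : Set.PairwiseDisjoint (↑(Icc 1 m)) S := by
    intro a ha b hb hab
    exact hdisj a (by simpa using ha) b (by simpa using hb) hab
  have hmem : ∀ k ∈ Icc 1 m, ∀ i ∈ S k, i ∈ Icc 1 N := by
    intro k hk i hi
    rw [← hcover]
    exact mem_biUnion.2 ⟨k, hk, hi⟩
  have hA : ∀ k ∈ Icc 1 m, 0 ≤ ∑ i ∈ S k, D i := fun k hk =>
    sum_nonneg fun i hi => hD0 i (hmem k hk i hi)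
  have hB : ∀ k ∈ Icc 1 m, 0 ≤ ∑ i ∈ S k, Ds i := fun k hk =>
    sum_nonneg fun i hi => hDs0 i (hmem k hk i hi)
  have hzero : ∀ k ∈ Icc 1 m, ¬ 0 < ∑ i ∈ S k, Ds i →
      ∑ i ∈ S k, D i = 0 ∧ ∑ i ∈ S k, Ds i = 0 := by
    intro k hk h
    have h1 : ¬ 0 < ∑ i ∈ S k, D i := fun h' => h (hpos k hk h')
    exact ⟨le_antisymm (not_lt.1 h1) (hA k hk), le_antisymm (not_lt.1 h) (hB k hk)⟩
  refine ⟨?_, ?_, ?_⟩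
  · intro i hi
    have hi2 := hi
    rw [← hcover] at hi2
    obtain ⟨k, hk, hik⟩ := mem_biUnion.1 hi2
    rw [hD' k hk i hik]
    split_ifs with h
    · exact div_nonneg (mul_nonneg (hA k hk) (hDs0 i hi)) h.le
    · exact le_rfl
  · rw [← hD1, ← hcover, sum_biUnion hpd, sum_biUnion hpd]
    refine sum_congr rfl fun k hk => ?_
    rw [sum_congr rfl (hD' k hk)]
    by_cases h : 0 < ∑ i ∈ S k, Ds i
    · simp only [if_pos h]
      rw [← sum_div, ← mul_sum, mul_div_assoc, div_self h.ne', mul_one]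
    · simp only [if_neg h]
      rw [(hzero k hk h).1, sum_const_zero]
  · congr 1
    rw [← hcover, sum_biUnion hpd]
    refine sum_congr rfl fun k hk => ?_
    by_cases h : 0 < ∑ i ∈ S k, Ds i
    · have key : ∀ i ∈ S k, |Ds i - D' i| =
          |(∑ i ∈ S k, Ds i) - ∑ i ∈ S k, D i| * Ds i / (∑ i ∈ S k, Ds i) := by
        intro i hi
        rw [hD' k hk i hi, if_pos h]
        have e : Ds i - (∑ j ∈ S k, D j) * Ds i / (∑ j ∈ S k, Ds j) =
            ((∑ i ∈ S k, Ds i) - ∑ i ∈ S k, D i) * Ds i / (∑ i ∈ S k, Ds i) := by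
          have := h.ne'
          generalize (∑ i ∈ S k, Ds i) = b at *
          field_simp
        rw [e, abs_div, abs_mul, abs_of_pos h, abs_of_nonneg (hDs0 i (hmem k hk i hi))]
      rw [sum_congr rfl key, ← sum_div, ← mul_sum, mul_div_assoc, div_self h.ne', mul_one]
    · obtain ⟨h1, h2⟩ := hzero k hk h
      have h3 := (sum_eq_zero_iff_of_nonneg (fun i hi => hDs0 i (hmem k hk i hi))).1 h2
      rw [h1, h2, sub_zero, abs_zero]
      refine sum_eq_zero fun i hi => ?_
      rw [hD' k hk i hi, if_neg h, h3 i hi, sub_zero, abs_zero]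
end

section
/- Let P and P* be distributions over [M], let 1 ≤ z ≤ M with P([z]) > 0 where [z] = {1, …, z}, and let S_1, …, S_k be a partition of [z] such that P*(S_j) ≤ (2/k)·P*([z]) for every 1 ≤ j ≤ k. Suppose that Σ_{j=1}^k min(P(S_j)/P([z]), 1/k) ≤ 3ε. Then Σ_{i=1}^z min(P(i), P*(i)) ≤ 6ε. -/
open Finset

/-- If `[z]` is partitioned into `S_1, …, S_k` with `P*(S_j) ≤ (2/k)·P*([z])` and the
reduced distribution of `P` on the parts has small overlap with uniform, i.e.
`Σ_j min(P(S_j)/P([z]), 1/k) ≤ 3ε`, then `Σ_{i ≤ z} min(P(i), P*(i)) ≤ 6ε`. -/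
theorem sum_min_le_of_reduced_overlap_small
    (M z k : ℕ) (hz1 : 1 ≤ z) (hzM : z ≤ M) (hk : 1 ≤ k) (ε : ℝ)
    (P Ps : ℕ → ℝ)
    (hP0 : ∀ i ∈ Icc 1 M, 0 ≤ P i) (hP1 : ∑ i ∈ Icc 1 M, P i = 1)
    (hPs0 : ∀ i ∈ Icc 1 M, 0 ≤ Ps i) (hPs1 : ∑ i ∈ Icc 1 M, Ps i = 1)
    (hPz : 0 < ∑ i ∈ Icc 1 z, P i)
    (S : ℕ → Finset ℕ)
    (hdisj : ∀ j₁ ∈ Icc 1 k, ∀ j₂ ∈ Icc 1 k, j₁ ≠ j₂ → Disjoint (S j₁) (S j₂))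
    (hcover : (Icc 1 k).biUnion S = Icc 1 z)
    (hSbound : ∀ j ∈ Icc 1 k, ∑ i ∈ S j, Ps i ≤ (2 / (k : ℝ)) * ∑ i ∈ Icc 1 z, Ps i)
    (hsmall : ∑ j ∈ Icc 1 k,
      min ((∑ i ∈ S j, P i) / (∑ i ∈ Icc 1 z, P i)) (1 / (k : ℝ)) ≤ 3 * ε) :
    ∑ i ∈ Icc 1 z, min (P i) (Ps i) ≤ 6 * ε := by
  have hsub : Icc 1 z ⊆ Icc 1 M := Icc_subset_Icc_right hzM
  have hkpos : (0 : ℝ) < k := by exact_mod_cast hk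
  have hPz1 : ∑ i ∈ Icc 1 z, P i ≤ 1 := by
    rw [← hP1]
    exact sum_le_sum_of_subset_of_nonneg hsub (fun i hi _ => hP0 i hi)
  have hPsz1 : ∑ i ∈ Icc 1 z, Ps i ≤ 1 := by
    rw [← hPs1]
    exact sum_le_sum_of_subset_of_nonneg hsub (fun i hi _ => hPs0 i hi)
  have hsplit : ∑ i ∈ Icc 1 z, min (P i) (Ps i)
      = ∑ j ∈ Icc 1 k, ∑ i ∈ S j, min (P i) (Ps i) := by
    rw [← hcover]
    exact sum_biUnion (fun a ha b hb hab => hdisj a ha b hb hab)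
  have key : ∀ j ∈ Icc 1 k, ∑ i ∈ S j, min (P i) (Ps i) ≤
      2 * min ((∑ i ∈ S j, P i) / (∑ i ∈ Icc 1 z, P i)) (1 / (k : ℝ)) := by
    intro j hj
    have hSj : S j ⊆ Icc 1 M := by
      refine subset_trans ?_ hsub
      rw [← hcover]
      exact subset_biUnion_of_mem S hj
    have h0 : 0 ≤ ∑ i ∈ S j, P i := sum_nonneg (fun i hi => hP0 i (hSj hi))
    have h1 : ∑ i ∈ S j, min (P i) (Ps i) ≤ ∑ i ∈ S j, P i :=
      sum_le_sum (fun i _ => min_le_left _ _)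
    have h2 : ∑ i ∈ S j, min (P i) (Ps i) ≤ ∑ i ∈ S j, Ps i :=
      sum_le_sum (fun i _ => min_le_right _ _)
    have h3 : ∑ i ∈ S j, P i ≤ (∑ i ∈ S j, P i) / (∑ i ∈ Icc 1 z, P i) := by
      rw [le_div_iff₀ hPz]
      exact mul_le_of_le_one_right h0 hPz1
    have h4 : (2 / (k : ℝ)) * ∑ i ∈ Icc 1 z, Ps i ≤ 2 / (k : ℝ) :=
      mul_le_of_le_one_right (by positivity) hPsz1
    have h5 : 2 / (k : ℝ) = 2 * (1 / (k : ℝ)) := by ring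
    have h6 := hSbound j hj
    rcases min_choice ((∑ i ∈ S j, P i) / (∑ i ∈ Icc 1 z, P i)) (1 / (k : ℝ)) with h | h <;>
      rw [h] <;> linarith
  have := sum_le_sum key
  rw [← mul_sum] at this
  linarith
end
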